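/- Let M be an admissible weight sequence with Λ_m = M_m^{1/m}, let σ > 1 satisfy Λ_{m+1} ≤ σ Λ_m for all m ≥ 1, fix an integer k ≥ 1, and let (k_j)_{j≥0} be a sequence of positive integers with k_0 = k and σ^{j−1} Λ_k ≤ Λ_{k_j} ≤ σ^j Λ_k for all j ≥ 1. Then there exist constants C, γ > 0 depending only on M and σ (independent of k) such that every u ∈ L²(ℝ^n) whose Fourier transform satisfies ξ^α û ∈ L²(ℝ^n) for all |α| ≤ k can be written as u = Σ_{j≥0} u_j with convergence in L²(ℝ^n), where each u_j ∈ L²(ℝ^n) satisfies ‖e^{ω_M(|ξ|)} û_j‖_{L²} < ∞, and Σ_{j≥0} Λ_{k_j}^{2k} ( ‖u_j‖²_{L²(ℝ^n)} + e^{−2ω_M(Λ_{k_j})} ‖e^{ω_M(|ξ|)} û_j‖²_{L²(ℝ^n)} ) ≤ C γ^k ( Σ_{|α|≤k} Λ_k^{k−|α|} ‖ξ^α û‖_{L²(ℝ^n)} )². -/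

import Mathlib

open MeasureTheory Filter Finset

noncomputable section

/-- `M` is a weight sequence: positivity, `M₀ = 1`, `M₁ ≥ 1`, log-convexity, and
`M_k^{1/k} → ∞`. -/
def IsWeightSeq (M : ℕ → ℝ) : Prop :=
  (∀ k, 0 < M k) ∧ M 0 = 1 ∧ 1 ≤ M 1 ∧
    (∀ k : ℕ, (M (k + 1)) ^ 2 ≤ M k * M (k + 2)) ∧
    Tendsto (fun k : ℕ => (M k) ^ ((k : ℝ)⁻¹)) atTop atTop

/-- `Λ_k = M_k^{1/k}`. -/
def Lam (M : ℕ → ℝ) (k : ℕ) : ℝ := (M k) ^ ((k : ℝ)⁻¹)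

/-- Condition (i): there are `C, h > 0` with `k! ≤ C h^k M_k` for all `k`. -/
def FactBound (M : ℕ → ℝ) : Prop :=
  ∃ C > 0, ∃ h > 0, ∀ k : ℕ, (k.factorial : ℝ) ≤ C * h ^ k * M k

/-- Condition (mg): there is `A > 0` with `M_{j+k} ≤ A^{j+k} M_j M_k` for all `j, k`. -/
def MG (M : ℕ → ℝ) : Prop := ∃ A > 0, ∀ j k : ℕ, M (j + k) ≤ A ^ (j + k) * M j * M k

/-- Admissible weight sequence. -/
def IsAdmissible (M : ℕ → ℝ) : Prop := IsWeightSeq M ∧ FactBound M ∧ MG M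

/-- Euclidean `n`-space. -/
abbrev Esp (n : ℕ) := EuclideanSpace ℝ (Fin n)

/-- The length `|α|` of a multi-index. -/
def degree {n : ℕ} (α : Fin n → ℕ) : ℕ := ∑ i, α i

/-- The finite set of all multi-indices `α` with `|α| ≤ k`. -/
def midx (n k : ℕ) : Finset (Fin n → ℕ) :=
  (Fintype.piFinset fun _ : Fin n => Finset.range (k + 1)).filter fun α => degree α ≤ k

/-- The monomial `ξ^α`. -/
def mon {n : ℕ} (α : Fin n → ℕ) (ξ : Esp n) : ℝ := ∏ i, ξ i ^ α i

/-- The `L²(ℝ^n)` norm of a complex-valued function. -/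
def L2C {n : ℕ} (g : Esp n → ℂ) : ℝ := (∫ ξ : Esp n, ‖g ξ‖ ^ 2) ^ ((1 : ℝ) / 2)

/-- The weight function `ω_M` associated to `M`. -/
def omegaM (M : ℕ → ℝ) (t : ℝ) : ℝ := ⨆ k : ℕ, Real.log (t ^ k / M k)

lemma sum_pow_le_card {n m : ℕ} (f : Fin n → ℝ) (hf : ∀ i, 0 ≤ f i) :
    (∑ i, f i) ^ (m + 1) ≤ (n : ℝ) ^ (m + 1) * ∑ i, f i ^ (m + 1) := by
  rcases Nat.eq_zero_or_pos n with rfl | hn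
  · simp
  · have : Nonempty (Fin n) := ⟨⟨0, hn⟩⟩
    obtain ⟨i, hi⟩ := Finite.exists_max f
    have h1 : ∑ j, f j ≤ n * f i := by
      simpa using Finset.sum_le_card_nsmul Finset.univ f (f i) (fun j _ => hi j)
    have h2 := pow_le_pow_left₀ (Finset.sum_nonneg fun j _ => hf j) h1 (m + 1)
    rw [mul_pow] at h2
    refine h2.trans (mul_le_mul_of_nonneg_left ?_ (by positivity))
    exact Finset.single_le_sum (f := fun j => f j ^ (m + 1))
      (fun j _ => pow_nonneg (hf j) _) (mem_univ i)

lemma omegaM_bdd {M : ℕ → ℝ} (hM : IsWeightSeq M) (t : ℝ) (ht : 0 ≤ t) :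
    BddAbove (Set.range fun k : ℕ => Real.log (t ^ k / M k)) := by
  obtain ⟨hpos, -, -, -, hlim⟩ := hM
  apply Filter.IsBoundedUnder.bddAbove_range
  refine ⟨0, ?_⟩
  rw [Filter.eventually_map]
  filter_upwards [hlim.eventually_ge_atTop t, Filter.eventually_ge_atTop 1] with k hk hk1
  have h1 : ((M k) ^ ((k : ℝ)⁻¹)) ^ k = M k :=
    Real.rpow_inv_natCast_pow (hpos k).le (by omega)
  have h2 : t ^ k ≤ M k := by
    rw [← h1]; exact pow_le_pow_left₀ ht hk k
  exact Real.log_nonpos (div_nonneg (pow_nonneg ht k) (hpos k).le)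
    ((div_le_one (hpos k)).2 h2)

lemma omegaM_mono {M : ℕ → ℝ} (hM : IsWeightSeq M) {s t : ℝ} (hs : 0 ≤ s) (hst : s ≤ t) :
    omegaM M s ≤ omegaM M t := by
  have ht : 0 ≤ t := hs.trans hst
  have hb := omegaM_bdd hM t ht
  have h0 : 0 ≤ omegaM M t := by
    have h := le_ciSup hb 0
    simp only [pow_zero, hM.2.1, div_one, Real.log_one] at h
    exact h
  refine ciSup_le fun k => ?_
  have hpos := hM.1
  rcases hs.eq_or_lt with h | h
  · subst h
    rcases Nat.eq_zero_or_pos k with rfl | hk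
    · simpa [hM.2.1] using h0
    · simpa [zero_pow hk.ne'] using h0
  · refine le_trans ?_ (le_ciSup hb k)
    have := hpos k
    exact Real.log_le_log (by positivity)
      (div_le_div_of_nonneg_right (pow_le_pow_left₀ hs hst k) this.le)

lemma omegaM_meas {M : ℕ → ℝ} (hM : IsWeightSeq M) {n : ℕ} :
    Measurable (fun ξ : Esp n => Real.exp (2 * omegaM M ‖ξ‖)) := by
  have h1 : Monotone (fun t : ℝ => omegaM M (max t 0)) := fun s t hst =>
    omegaM_mono hM (le_max_right _ _) (max_le_max hst le_rfl)
  have h2 : (fun ξ : Esp n => Real.exp (2 * omegaM M ‖ξ‖)) =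
      fun ξ : Esp n => Real.exp (2 * (fun t : ℝ => omegaM M (max t 0)) ‖ξ‖) := by
    funext ξ
    simp only [max_eq_left (norm_nonneg ξ)]
  rw [h2]
  exact Real.measurable_exp.comp ((h1.measurable.comp measurable_norm).const_mul 2)

lemma norm_pow_le_sum {n : ℕ} (k : ℕ) (hk : 1 ≤ k) (ξ : Esp n) :
    ‖ξ‖ ^ (2 * k) ≤ (n : ℝ) ^ k * ∑ i, (ξ i) ^ (2 * k) := by
  have h := EuclideanSpace.real_norm_sq_eq ξ
  rw [pow_mul, h]
  obtain ⟨m, rfl⟩ : ∃ m, k = m + 1 := ⟨k - 1, by omega⟩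
  have h3 := sum_pow_le_card (n := n) (m := m) (fun i => (ξ i) ^ 2) (fun i => sq_nonneg _)
  simpa only [← pow_mul] using h3

lemma mon_single {n : ℕ} (k : ℕ) (i : Fin n) (ξ : Esp n) :
    mon (Pi.single i k) ξ = ξ i ^ k := by
  unfold mon
  rw [Finset.prod_eq_single i]
  · simp
  · intro b _ hb; simp [hb]
  · simp

lemma degree_single {n : ℕ} (k : ℕ) (i : Fin n) :
    degree (Pi.single i k : Fin n → ℕ) = k := by
  simp [degree]

lemma mem_midx {n k : ℕ} (α : Fin n → ℕ) (h : degree α ≤ k) : α ∈ midx n k := by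
  unfold midx
  simp only [Finset.mem_filter, Fintype.mem_piFinset, Finset.mem_range]
  refine ⟨fun i => ?_, h⟩
  have : α i ≤ degree α := Finset.single_le_sum (f := α) (fun _ _ => Nat.zero_le _) (mem_univ i)
  omega

lemma L2C_nonneg {n : ℕ} (g : Esp n → ℂ) : 0 ≤ L2C g :=
  Real.rpow_nonneg (integral_nonneg fun _ => by positivity) _

lemma L2C_sq {n : ℕ} (g : Esp n → ℂ) : (L2C g) ^ 2 = ∫ ξ, ‖g ξ‖ ^ 2 := by
  unfold L2C
  rw [← Real.sqrt_eq_rpow]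
  exact Real.sq_sqrt (integral_nonneg fun _ => by positivity)

/-- (Lemma 5 of the paper), stated on the Fourier transform side: here
`g` plays the role of the Fourier–Plancherel transform `û` of `u ∈ H^k(ℝ^n)` and `gj j` the
role of `û_j`; by Plancherel's theorem, `L²` norms and `L²` convergence of the `u_j` are
equivalent to those of the `ĝ_j`.  There are constants `C, γ > 0` depending only on `M` and
`σ` such that for every `k ≥ 1`, every sequence `(k_j)` as in Lemma 1 and every `g ∈ L²` with
`ξ^α g ∈ L²` for `|α| ≤ k`, one can decompose `g = ∑ g_j` in `L²` with
`‖e^{ω_M(|ξ|)} g_j‖_{L²} < ∞` and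
`∑_j Λ_{k_j}^{2k} (‖g_j‖² + e^{-2ω_M(Λ_{k_j})} ‖e^{ω_M(|ξ|)} g_j‖²)
  ≤ C γ^k (∑_{|α|≤k} Λ_k^{k-|α|} ‖ξ^α g‖_{L²})²`. -/
theorem statement13 {n : ℕ} (M : ℕ → ℝ) (hM : IsAdmissible M)
    (σ : ℝ) (hσ : 1 < σ) (hσΛ : ∀ m : ℕ, 1 ≤ m → Lam M (m + 1) ≤ σ * Lam M m) :
    ∃ C > 0, ∃ γ > 0, ∀ k : ℕ, 1 ≤ k → ∀ kj : ℕ → ℕ, (∀ j, 1 ≤ kj j) → kj 0 = k →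
      (∀ j : ℕ, 1 ≤ j →
        σ ^ (j - 1) * Lam M k ≤ Lam M (kj j) ∧ Lam M (kj j) ≤ σ ^ j * Lam M k) →
      ∀ g : Esp n → ℂ,
      (∀ α : Fin n → ℕ, degree α ≤ k →
        MemLp (fun ξ => mon α ξ • g ξ) 2 (volume : Measure (Esp n))) →
      ∃ gj : ℕ → Esp n → ℂ,
        (∀ j, MemLp (gj j) 2 (volume : Measure (Esp n))) ∧
        Tendsto (fun N => eLpNorm (fun ξ => g ξ - ∑ j ∈ Finset.range N, gj j ξ) 2
          (volume : Measure (Esp n))) atTop (nhds 0) ∧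
        (∀ j, Integrable
          (fun ξ : Esp n => Real.exp (2 * omegaM M ‖ξ‖) * ‖gj j ξ‖ ^ 2) volume) ∧
        Summable (fun j => (Lam M (kj j)) ^ (2 * k) *
          ((∫ ξ : Esp n, ‖gj j ξ‖ ^ 2) + Real.exp (-2 * omegaM M (Lam M (kj j))) *
            ∫ ξ : Esp n, Real.exp (2 * omegaM M ‖ξ‖) * ‖gj j ξ‖ ^ 2)) ∧
        (∑' j, (Lam M (kj j)) ^ (2 * k) *
          ((∫ ξ : Esp n, ‖gj j ξ‖ ^ 2) + Real.exp (-2 * omegaM M (Lam M (kj j))) *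
            ∫ ξ : Esp n, Real.exp (2 * omegaM M ‖ξ‖) * ‖gj j ξ‖ ^ 2)) ≤
          C * γ ^ k * (∑ α ∈ midx n k,
            (Lam M k) ^ (k - degree α) * L2C (fun ξ => mon α ξ • g ξ)) ^ 2 := by
  have hW := hM.1
  have hσ0 : 0 < σ := by linarith
  refine ⟨2 * (n + 1), by positivity, σ ^ 4 * (n + 1), by positivity, ?_⟩
  intro k hk kj hkj hkj0 hkjb g hg
  -- radii
  set r : ℕ → ℝ := fun j => Lam M (kj j) with hr
  have hrpos : ∀ j, 0 < r j := fun j => Real.rpow_pos_of_pos (hW.1 _) _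
  have hr0 : r 0 = Lam M k := by simp [hr, hkj0]
  have hΛ : 0 < Lam M k := hr0 ▸ hrpos 0
  have hup : ∀ j, r j ≤ σ ^ j * Lam M k := by
    intro j
    rcases Nat.eq_zero_or_pos j with rfl | hj
    · simp [hr0]
    · exact (hkjb j hj).2
  have hlow : ∀ j, σ ^ j * Lam M k ≤ r (j + 1) := fun j => (hkjb (j + 1) (by omega)).1
  have hmono : Monotone r := monotone_nat_of_le_succ fun j => (hup j).trans (hlow j)
  have hstep : ∀ j, r (j + 1) ≤ σ ^ 2 * r j := by
    intro j
    rcases j with _ | j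
    · rw [hr0]
      refine (hup 1).trans ?_
      apply mul_le_mul_of_nonneg_right _ hΛ.le
      nlinarith
    · calc r (j + 1 + 1) ≤ σ ^ (j + 2) * Lam M k := hup _
        _ = σ ^ 2 * (σ ^ j * Lam M k) := by ring
        _ ≤ _ := mul_le_mul_of_nonneg_left (hlow j) (by positivity)
  -- the shells
  let A : ℕ → Set (Esp n) := fun j =>
    Nat.casesOn j {ξ | ‖ξ‖ ≤ r 0} (fun i => {ξ | r i < ‖ξ‖ ∧ ‖ξ‖ ≤ r (i + 1)})
  have hA : ∀ j, MeasurableSet (A j) := by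
    intro j
    rcases j with _ | j
    · exact measurableSet_le measurable_norm measurable_const
    · exact (measurableSet_lt measurable_const measurable_norm).inter
        (measurableSet_le measurable_norm measurable_const)
  have hAr : ∀ j, ∀ ξ ∈ A j, ‖ξ‖ ≤ r j := by
    intro j ξ h
    rcases j with _ | j
    · exact h
    · exact h.2
  have hsum : ∀ {E : Type} [AddCommMonoid E] (f : Esp n → E) (ξ : Esp n) (N : ℕ),
      ∑ j ∈ Finset.range (N + 1), (A j).indicator f ξ = {ξ | ‖ξ‖ ≤ r N}.indicator f ξ := by
    intro E _ f ξ N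
    induction N with
    | zero => simp [A]
    | succ N ih =>
      rw [Finset.sum_range_succ, ih]
      have hm := hmono (Nat.le_succ N)
      by_cases h1 : ‖ξ‖ ≤ r N
      · have h2 : ‖ξ‖ ≤ r (N + 1) := h1.trans hm
        have h3 : ξ ∉ A (N + 1) := fun h => absurd h.1 (not_lt.2 h1)
        rw [Set.indicator_of_notMem h3]; simp [Set.indicator, h1, h2]
      · by_cases h2 : ‖ξ‖ ≤ r (N + 1)
        · have h3 : ξ ∈ A (N + 1) := ⟨not_le.1 h1, h2⟩
          rw [Set.indicator_of_mem h3]; simp [Set.indicator, h1, h2]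
        · have h3 : ξ ∉ A (N + 1) := fun h => h2 h.2
          rw [Set.indicator_of_notMem h3]; simp [Set.indicator, h1, h2]
  -- integrability
  have hg2 : MemLp g 2 (volume : Measure (Esp n)) := by
    have := hg 0 (by simp [degree])
    simpa [mon] using this
  have hgi : Integrable (fun ξ => ‖g ξ‖ ^ 2) (volume : Measure (Esp n)) :=
    (memLp_two_iff_integrable_sq_norm hg2.1).1 hg2
  have hmi : ∀ i : Fin n, Integrable (fun ξ : Esp n => ξ i ^ (2 * k) * ‖g ξ‖ ^ 2) := by
    intro i
    have h := hg (Pi.single i k) (degree_single k i).le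
    have h' := (memLp_two_iff_integrable_sq_norm h.1).1 h
    refine h'.congr (Filter.Eventually.of_forall fun ξ => ?_)
    simp only [mon_single, norm_smul, mul_pow, norm_pow, Real.norm_eq_abs]
    rw [← pow_mul, mul_comm k 2, pow_mul, sq_abs, ← pow_mul]
  have hmi2 : ∀ i : Fin n, ∫ ξ : Esp n, ξ i ^ (2 * k) * ‖g ξ‖ ^ 2 =
      (L2C (fun ξ => mon (Pi.single i k) ξ • g ξ)) ^ 2 := by
    intro i
    rw [L2C_sq]
    congr 1
    funext ξ
    simp only [mon_single, norm_smul, mul_pow, norm_pow, Real.norm_eq_abs]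
    rw [← pow_mul, mul_comm k 2, pow_mul |ξ i|, sq_abs, ← pow_mul]
  have hpi : Integrable (fun ξ : Esp n => (n : ℝ) ^ k * ∑ i, ξ i ^ (2 * k) * ‖g ξ‖ ^ 2) :=
    (integrable_finsetSum _ fun i _ => hmi i).const_mul _
  have hple : ∀ ξ : Esp n, ‖ξ‖ ^ (2 * k) * ‖g ξ‖ ^ 2 ≤
      (n : ℝ) ^ k * ∑ i, ξ i ^ (2 * k) * ‖g ξ‖ ^ 2 := by
    intro ξ
    rw [← Finset.sum_mul, ← mul_assoc]
    exact mul_le_mul_of_nonneg_right (norm_pow_le_sum k hk ξ) (by positivity)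
  have hgnm : AEStronglyMeasurable (fun ξ => ‖g ξ‖ ^ 2) (volume : Measure (Esp n)) := hgi.1
  have hki : Integrable (fun ξ : Esp n => ‖ξ‖ ^ (2 * k) * ‖g ξ‖ ^ 2) := by
    refine hpi.mono' (((continuous_norm.pow _).aestronglyMeasurable).mul hgnm)
      (Filter.Eventually.of_forall fun ξ => ?_)
    rw [Real.norm_of_nonneg (by positivity)]
    exact hple ξ
  set S := ∑ α ∈ midx n k, (Lam M k) ^ (k - degree α) * L2C (fun ξ => mon α ξ • g ξ) with hS
  have hterm : ∀ α, degree α ≤ k →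
      (Lam M k) ^ (k - degree α) * L2C (fun ξ => mon α ξ • g ξ) ≤ S := fun α hα =>
    Finset.single_le_sum
      (f := fun α => (Lam M k) ^ (k - degree α) * L2C (fun ξ => mon α ξ • g ξ))
      (fun α _ => mul_nonneg (by positivity) (L2C_nonneg _)) (mem_midx α hα)
  have hS1 : Lam M k ^ (2 * k) * ∫ ξ : Esp n, ‖g ξ‖ ^ 2 ≤ S ^ 2 := by
    have h := hterm 0 (by simp [degree])
    have h2 := pow_le_pow_left₀ (mul_nonneg (by positivity) (L2C_nonneg _)) h 2
    rw [mul_pow, L2C_sq, ← pow_mul] at h2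
    simpa [mon, degree, mul_comm k 2] using h2
  have hS2 : ∫ ξ : Esp n, ‖ξ‖ ^ (2 * k) * ‖g ξ‖ ^ 2 ≤ (n : ℝ) ^ k * (n * S ^ 2) := by
    refine (integral_mono hki hpi hple).trans ?_
    rw [integral_const_mul, integral_finsetSum _ fun i _ => hmi i]
    refine mul_le_mul_of_nonneg_left ?_ (by positivity)
    calc ∑ i, ∫ ξ : Esp n, ξ i ^ (2 * k) * ‖g ξ‖ ^ 2 ≤ ∑ i : Fin n, S ^ 2 := by
          refine Finset.sum_le_sum fun i _ => ?_
          rw [hmi2]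
          have h := hterm (Pi.single i k) (degree_single k i).le
          rw [degree_single, Nat.sub_self, pow_zero, one_mul] at h
          exact pow_le_pow_left₀ (L2C_nonneg _) h 2
      _ = n * S ^ 2 := by simp
  let F : Esp n → ℝ := fun ξ =>
    Lam M k ^ (2 * k) * ‖g ξ‖ ^ 2 + σ ^ (4 * k) * (‖ξ‖ ^ (2 * k) * ‖g ξ‖ ^ 2)
  have hFi : Integrable F := (hgi.const_mul _).add (hki.const_mul _)
  have hF0 : ∀ ξ, 0 ≤ F ξ := fun ξ => by positivity
  have hFS : 2 * ∫ ξ, F ξ ≤ 2 * (n + 1) * (σ ^ 4 * (n + 1)) ^ k * S ^ 2 := by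
    have h1 : ∫ ξ, F ξ ≤ S ^ 2 + σ ^ (4 * k) * ((n : ℝ) ^ k * (n * S ^ 2)) := by
      simp only [F]
      rw [integral_add (hgi.const_mul _) (hki.const_mul _), integral_const_mul,
        integral_const_mul]
      exact add_le_add hS1 (mul_le_mul_of_nonneg_left hS2 (by positivity))
    have h2 : (n : ℝ) ^ k ≤ ((n : ℝ) + 1) ^ k := pow_le_pow_left₀ (by positivity) (by linarith) k
    have h3 : 1 ≤ σ ^ (4 * k) := one_le_pow₀ hσ.le
    have h4 : 1 ≤ ((n : ℝ) + 1) ^ k := one_le_pow₀ (by linarith [Nat.cast_nonneg (α := ℝ) n])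
    have h5 : 1 ≤ σ ^ (4 * k) * ((n : ℝ) + 1) ^ k := one_le_mul_of_one_le_of_one_le h3 h4
    have h6 : σ ^ (4 * k) * (n : ℝ) ^ k ≤ σ ^ (4 * k) * ((n : ℝ) + 1) ^ k :=
      mul_le_mul_of_nonneg_left h2 (by positivity)
    have h7 := mul_le_mul_of_nonneg_right h5 (sq_nonneg S)
    have h8 := mul_le_mul_of_nonneg_right h6 (show 0 ≤ n * S ^ 2 by positivity)
    rw [mul_pow, ← pow_mul]
    nlinarith
  -- the pieces
  let gj : ℕ → Esp n → ℂ := fun j => (A j).indicator g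
  have hnorm : ∀ j ξ, ‖gj j ξ‖ ^ 2 = (A j).indicator (fun ξ => ‖g ξ‖ ^ 2) ξ := by
    intro j ξ
    rcases Classical.em (ξ ∈ A j) with h | h <;> simp [gj, h]
  have hexp : ∀ j, ∀ ξ, Real.exp (2 * omegaM M ‖ξ‖) * ‖gj j ξ‖ ^ 2 ≤
      Real.exp (2 * omegaM M (r j)) * ‖gj j ξ‖ ^ 2 := by
    intro j ξ
    rcases Classical.em (ξ ∈ A j) with h | h
    · refine mul_le_mul_of_nonneg_right (Real.exp_le_exp.2 ?_) (by positivity)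
      have := omegaM_mono hW (norm_nonneg ξ) (hAr j ξ h)
      linarith
    · simp [gj, h]
  have hmem : ∀ j, MemLp (gj j) 2 (volume : Measure (Esp n)) := fun j => hg2.indicator (hA j)
  have hgji : ∀ j, Integrable (fun ξ => ‖gj j ξ‖ ^ 2) (volume : Measure (Esp n)) := fun j =>
    (memLp_two_iff_integrable_sq_norm (hmem j).1).1 (hmem j)
  have hei : ∀ j, Integrable
      (fun ξ : Esp n => Real.exp (2 * omegaM M ‖ξ‖) * ‖gj j ξ‖ ^ 2) volume := by
    intro j
    refine ((hgji j).const_mul (Real.exp (2 * omegaM M (r j)))).mono'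
      ((omegaM_meas hW).aestronglyMeasurable.mul (hgji j).1)
      (Filter.Eventually.of_forall fun ξ => ?_)
    rw [Real.norm_of_nonneg (by positivity)]
    exact hexp j ξ
  set a : ℕ → ℝ := fun j => (Lam M (kj j)) ^ (2 * k) *
          ((∫ ξ : Esp n, ‖gj j ξ‖ ^ 2) + Real.exp (-2 * omegaM M (Lam M (kj j))) *
            ∫ ξ : Esp n, Real.exp (2 * omegaM M ‖ξ‖) * ‖gj j ξ‖ ^ 2) with ha
  have ha0 : ∀ j, 0 ≤ a j := by
    intro j
    have h1 : 0 ≤ ∫ ξ : Esp n, ‖gj j ξ‖ ^ 2 := integral_nonneg fun _ => by positivity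
    have h2 : 0 ≤ ∫ ξ : Esp n, Real.exp (2 * omegaM M ‖ξ‖) * ‖gj j ξ‖ ^ 2 :=
      integral_nonneg fun _ => by positivity
    have := hrpos j
    simp only [hr] at this
    simp only [ha]
    positivity
  have hptw : ∀ j ξ, r j ^ (2 * k) * ‖gj j ξ‖ ^ 2 ≤ (A j).indicator F ξ := by
    intro j ξ
    rcases Classical.em (ξ ∈ A j) with h | h
    · simp only [gj, Set.indicator_of_mem h]
      rcases j with _ | j
      · simp only [F, hr0]
        have : 0 ≤ σ ^ (4 * k) * (‖ξ‖ ^ (2 * k) * ‖g ξ‖ ^ 2) := by positivity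
        linarith
      · have h1 : r (j + 1) ≤ σ ^ 2 * ‖ξ‖ :=
          (hstep j).trans (mul_le_mul_of_nonneg_left h.1.le (by positivity))
        have h2 := pow_le_pow_left₀ (hrpos _).le h1 (2 * k)
        have h3 := mul_le_mul_of_nonneg_right h2 (show 0 ≤ ‖g ξ‖ ^ 2 by positivity)
        have h4 : (σ ^ 2 * ‖ξ‖) ^ (2 * k) * ‖g ξ‖ ^ 2 =
            σ ^ (4 * k) * (‖ξ‖ ^ (2 * k) * ‖g ξ‖ ^ 2) := by
          rw [mul_pow, ← pow_mul]; ring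
        have : 0 ≤ Lam M k ^ (2 * k) * ‖g ξ‖ ^ 2 := by positivity
        simp only [F]
        linarith
    · simp [gj, h]
  have haj : ∀ j, a j ≤ 2 * ∫ ξ, (A j).indicator F ξ := by
    intro j
    have h1 : Real.exp (-2 * omegaM M (r j)) *
        ∫ ξ : Esp n, Real.exp (2 * omegaM M ‖ξ‖) * ‖gj j ξ‖ ^ 2 ≤ ∫ ξ : Esp n, ‖gj j ξ‖ ^ 2 := by
      have h := integral_mono (hei j) ((hgji j).const_mul _) (hexp j)
      rw [integral_const_mul] at h
      refine (mul_le_mul_of_nonneg_left h (Real.exp_pos _).le).trans (le_of_eq ?_)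
      rw [← mul_assoc, ← Real.exp_add]
      simp
    have h2 : r j ^ (2 * k) * ∫ ξ : Esp n, ‖gj j ξ‖ ^ 2 ≤ ∫ ξ, (A j).indicator F ξ := by
      rw [← integral_const_mul]
      exact integral_mono ((hgji j).const_mul _) (hFi.indicator (hA j)) (hptw j)
    have h3 : 0 ≤ r j ^ (2 * k) := pow_nonneg (hrpos j).le _
    have h4 := mul_le_mul_of_nonneg_left h1 h3
    simp only [ha]
    simp only [hr] at h2 h4 ⊢
    rw [mul_add]
    linarith
  have hpart : ∀ N, ∑ j ∈ Finset.range N, a j ≤ 2 * ∫ ξ, F ξ := by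
    intro N
    calc ∑ j ∈ Finset.range N, a j ≤ ∑ j ∈ Finset.range (N + 1), a j := by
          rw [Finset.sum_range_succ]; linarith [ha0 N]
      _ ≤ ∑ j ∈ Finset.range (N + 1), 2 * ∫ ξ, (A j).indicator F ξ :=
          Finset.sum_le_sum fun j _ => haj j
      _ = 2 * ∫ ξ, {ξ : Esp n | ‖ξ‖ ≤ r N}.indicator F ξ := by
          rw [← Finset.mul_sum, ← integral_finsetSum _ fun j _ => hFi.indicator (hA j)]
          simp only [hsum]
      _ ≤ 2 * ∫ ξ, F ξ := by
          refine mul_le_mul_of_nonneg_left ?_ (by norm_num)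
          refine integral_mono
            (hFi.indicator (measurableSet_le measurable_norm measurable_const)) hFi ?_
          intro ξ
          exact Set.indicator_le_self' (fun _ _ => hF0 _) ξ
  refine ⟨gj, hmem, ?_, hei, summable_of_sum_range_le ha0 hpart,
    (Real.tsum_le_of_sum_range_le ha0 hpart).trans hFS⟩
  -- convergence
  have hkm : MemLp (fun ξ : Esp n => ‖ξ‖ ^ k • g ξ) 2 (volume : Measure (Esp n)) := by
    have hm : AEStronglyMeasurable (fun ξ : Esp n => ‖ξ‖ ^ k • g ξ) volume :=
      ((continuous_norm.pow _).aestronglyMeasurable).smul hg2.1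
    refine (memLp_two_iff_integrable_sq_norm hm).2 (hki.congr
      (Filter.Eventually.of_forall fun ξ => ?_))
    simp only [norm_smul, mul_pow, norm_pow, norm_norm]
    rw [← pow_mul, mul_comm k 2]
  rw [← Filter.tendsto_add_atTop_iff_nat 2]
  have hbd : ∀ N, eLpNorm (fun ξ => g ξ - ∑ j ∈ Finset.range (N + 2), gj j ξ) 2
      (volume : Measure (Esp n)) ≤
      ENNReal.ofReal (((r (N + 1)) ^ k)⁻¹) *
        eLpNorm (fun ξ : Esp n => ‖ξ‖ ^ k • g ξ) 2 (volume : Measure (Esp n)) := by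
    intro N
    refine eLpNorm_le_mul_eLpNorm_of_ae_le_mul (Filter.Eventually.of_forall fun ξ => ?_) 2
    simp only [gj]
    rw [hsum g ξ (N + 1)]
    have hp := hrpos (N + 1)
    by_cases h : ‖ξ‖ ≤ r (N + 1)
    · simp only [Set.indicator, Set.mem_setOf_eq, h, if_true, sub_self, norm_zero]
      positivity
    · simp only [Set.indicator, Set.mem_setOf_eq, h, if_false, sub_zero, norm_smul, norm_pow,
        norm_norm]
      rw [← mul_assoc]
      refine le_mul_of_one_le_left (norm_nonneg _) ?_
      rw [inv_mul_eq_div, one_le_div (by positivity)]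
      exact pow_le_pow_left₀ hp.le (not_le.1 h).le k
  refine tendsto_of_tendsto_of_tendsto_of_le_of_le tendsto_const_nhds ?_
    (fun _ => zero_le) hbd
  have hrt : Tendsto (fun N => r (N + 1)) atTop atTop :=
    tendsto_atTop_mono hlow
      ((tendsto_pow_atTop_atTop_of_one_lt hσ).atTop_mul_const hΛ)
  have h1 : Tendsto (fun N => ((r (N + 1)) ^ k)⁻¹) atTop (nhds 0) :=
    tendsto_inv_atTop_zero.comp ((tendsto_pow_atTop (by omega)).comp hrt)
  have h2 := ENNReal.tendsto_ofReal h1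
  have h3 := ENNReal.Tendsto.mul_const h2
    (b := eLpNorm (fun ξ : Esp n => ‖ξ‖ ^ k • g ξ) 2 (volume : Measure (Esp n)))
    (Or.inr hkm.2.ne)
  simpa using h3

end
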